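/- Let H be a real Hilbert space, d ≥ 1 an integer, C ⊆ H a nonempty closed convex set with ‖x − y‖ ≤ d for all x, y ∈ C, T : C → C nonexpansive with Fix(T) ≠ ∅, and G : C → C a τ-contraction (0 ≤ τ < 1). Let (λ_n) ⊆ (0,1], h : ℕ → ℕ⁺ with λ_n ≥ 1/h(n) for all n, and χ : ℕ → ℕ with λ_i ≤ 1/(n+1) for all n ∈ ℕ and all i ≥ χ(n). Let v : ℕ → C satisfy v_n = (1−λ_n)·T(v_n) + λ_n·G(T(v_n)) for all n. Then for every ε ∈ (0,1] and every g : ℕ → ℕ there exists j ≤ Ξ(ε, g, χ, h, d, τ) such that ‖v_j − v_{g̃(j)}‖ ≤ ε. -/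

import Mathlib

open scoped RealInnerProductSpace

/-- `fM f n = max {f i : 1 ≤ i ≤ n}`. -/
def fM (f : ℕ → ℕ) (n : ℕ) : ℕ := (Finset.Icc 1 n).sup f

/-- `ftilde d f n = max {fᴹ(16·d·n²), 16·d·n²}`. -/
def ftilde (d : ℕ) (f : ℕ → ℕ) (n : ℕ) : ℕ := max (fM f (16 * d * n ^ 2)) (16 * d * n ^ 2)

/-- `fIt d nε f i = f̃^(nε^i)`, the `nε^i`-fold iterate of `f̃`. -/
def fIt (d nε : ℕ) (f : ℕ → ℕ) (i : ℕ) (k : ℕ) : ℕ := (ftilde d f)^[nε ^ i] k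

/-- `ftildeI d nε f i n = max {fᵢᴹ(16·d·n²), 16·d·n²}`. -/
def ftildeI (d nε : ℕ) (f : ℕ → ℕ) (i : ℕ) (n : ℕ) : ℕ :=
  max (fM (fIt d nε f i) (16 * d * n ^ 2)) (16 * d * n ^ 2)

/-- The recursively defined sequence `k₀ := f̃₀^(nε)(1)`, `k_{i+1} := f̃ᵢ^(nε)(kᵢ)`. -/
def kSeq (d nε : ℕ) (f : ℕ → ℕ) : ℕ → ℕ
  | 0 => (ftildeI d nε f 0)^[nε] 1
  | (i + 1) => (ftildeI d nε f i)^[nε] (kSeq d nε f i)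

/-- `Kdef d τ ε̃ f = k_{i₀}` where `n_ε̃ := ⌈8d⁴/ε̃⁴⌉` and `i₀` is the least `i`
with `τ^(i+1) ≤ ε̃/(6d²)`. -/
noncomputable def Kdef (d : ℕ) (τ εt : ℝ) (f : ℕ → ℕ) : ℕ :=
  kSeq d ⌈8 * (d : ℝ) ^ 4 / εt ^ 4⌉₊ f
    (sInf {i : ℕ | τ ^ (i + 1) ≤ εt / (6 * (d : ℝ) ^ 2)})

/-- `fM0 F n = max {F i : 0 ≤ i ≤ n}` (for functions on ℕ). -/
def fM0 (F : ℕ → ℕ) (n : ℕ) : ℕ := (Finset.range (n + 1)).sup F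

/-- `gTil g n = max {n, g n}`. -/
def gTil (g : ℕ → ℕ) (n : ℕ) : ℕ := max n (g n)

/-- The counterfunction majorant `f(n) := ⌈6d·hᴹ(g̃ᴹ(χ(d·n)))/((1−τ)(ε/2)²)⌉`. -/
noncomputable def fXi (ε τ : ℝ) (g χ h : ℕ → ℕ) (d : ℕ) (n : ℕ) : ℕ :=
  ⌈6 * (d : ℝ) * (fM0 h (fM0 (gTil g) (χ (d * n))) : ℝ) / ((1 - τ) * (ε / 2) ^ 2)⌉₊

/-- The quantity `K = k_{i₀}` occurring in the definition of `Ξ(ε, g, χ, h, d, τ)`,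
with `ε₁ := (1−τ)(ε/2)²/2`, `ε_d := ε₁²/(2d²)` and `ε̃ := ((1−τ)²/(6+8d))·ε_d`. -/
noncomputable def KXi (ε : ℝ) (g χ h : ℕ → ℕ) (d : ℕ) (τ : ℝ) : ℕ :=
  Kdef d τ ((1 - τ) ^ 2 / (6 + 8 * (d : ℝ)) *
    (((1 - τ) * (ε / 2) ^ 2 / 2) ^ 2 / (2 * (d : ℝ) ^ 2))) (fXi ε τ g χ h d)

/-- The rate of metastability `Ξ(ε, g, χ, h, d, τ) := χ(d·k_{i₀})`. -/
noncomputable def XiDef (ε : ℝ) (g χ h : ℕ → ℕ) (d : ℕ) (τ : ℝ) : ℕ :=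
  χ (d * KXi ε g χ h d τ)

/-- `x` is a `1/n`-approximate fixed point. -/
def AFp {H : Type*} [NormedAddCommGroup H] (T : H → H) (n : ℕ) (x : H) : Prop :=
  (n : ℝ) * ‖x - T x‖ ≤ 1

lemma AFp_mono {H : Type*} [NormedAddCommGroup H] {T : H → H} {m n : ℕ} {x : H} (hmn : m ≤ n)
    (hx : AFp T n x) : AFp T m x := by
  unfold AFp at *
  have : (m : ℝ) * ‖x - T x‖ ≤ n * ‖x - T x‖ := by gcongr
  linarith

lemma AFp_comb {H : Type*} [NormedAddCommGroup H] [InnerProductSpace ℝ H]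
    (d : ℕ) (hd : 1 ≤ d) (C : Set H) (hcv : Convex ℝ C)
    (hbd : ∀ x ∈ C, ∀ y ∈ C, ‖x - y‖ ≤ (d : ℝ))
    (T : H → H) (hT : ∀ x ∈ C, ∀ y ∈ C, ‖T x - T y‖ ≤ ‖x - y‖)
    (m : ℕ) (hm : 1 ≤ m) (x y : H) (hx : x ∈ C) (hy : y ∈ C)
    (hxa : AFp T (16 * d * m ^ 2) x) (hya : AFp T (16 * d * m ^ 2) y)
    (t : ℝ) (ht0 : 0 ≤ t) (ht1 : t ≤ 1) (hz : x + t • (y - x) ∈ C) :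
    AFp T m (x + t • (y - x)) := by
  unfold AFp at *
  set z := x + t • (y - x) with hzdef
  have hd' : (1 : ℝ) ≤ d := by exact_mod_cast hd
  have hm' : (1 : ℝ) ≤ m := by exact_mod_cast hm
  set δ : ℝ := 1 / (16 * d * m ^ 2) with hδ
  have hδ0 : 0 < δ := by positivity
  push_cast at hxa hya
  have hx1 : ‖x - T x‖ ≤ δ := by
    rw [hδ, le_div_iff₀ (by positivity)]; linarith
  have hy1 : ‖y - T y‖ ≤ δ := by
    rw [hδ, le_div_iff₀ (by positivity)]; linarith
  have hxz : ‖x - z‖ = t * ‖x - y‖ := by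
    have : x - z = t • (x - y) := by rw [hzdef, smul_sub, smul_sub]; abel
    rw [this, norm_smul, Real.norm_of_nonneg ht0]
  have hyz : ‖y - z‖ = (1 - t) * ‖x - y‖ := by
    have : y - z = (1 - t) • (y - x) := by rw [hzdef, sub_smul, one_smul]; abel
    rw [this, norm_smul, Real.norm_of_nonneg (by linarith), norm_sub_rev]
  have h1 : ‖x - T z‖ ≤ δ + t * ‖x - y‖ := by
    have : x - T z = (x - T x) + (T x - T z) := by abel
    rw [this]
    linarith [norm_add_le (x - T x) (T x - T z), hT x hx z hz]
  have h2 : ‖y - T z‖ ≤ δ + (1 - t) * ‖x - y‖ := by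
    have : y - T z = (y - T y) + (T y - T z) := by abel
    rw [this]
    linarith [norm_add_le (y - T y) (T y - T z), hT y hy z hz]
  have hid : ‖z - T z‖ ^ 2 = (1 - t) * ‖x - T z‖ ^ 2 + t * ‖y - T z‖ ^ 2
      - t * (1 - t) * ‖x - y‖ ^ 2 := by
    have e1 : z - T z = (x - T z) + t • (y - x) := by rw [hzdef]; abel
    have e2 : y - T z = (x - T z) + (y - x) := by abel
    rw [e1, e2, norm_sub_rev x y, norm_add_sq_real, norm_add_sq_real, inner_smul_right,
      norm_smul, Real.norm_of_nonneg ht0]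
    ring
  have h1' : ‖x - T z‖ ^ 2 ≤ (δ + t * ‖x - y‖) ^ 2 := by gcongr
  have h2' : ‖y - T z‖ ^ 2 ≤ (δ + (1 - t) * ‖x - y‖) ^ 2 := by gcongr
  have hR := hbd x hx y hy
  have hR0 := norm_nonneg (x - y)
  have h3 : ‖z - T z‖ ^ 2 ≤ δ ^ 2 + 4 * (t * (1 - t)) * δ * ‖x - y‖ := by
    have a1 := mul_le_mul_of_nonneg_left h1' (by linarith : 0 ≤ 1 - t)
    have a2 := mul_le_mul_of_nonneg_left h2' ht0
    rw [hid]; nlinarith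
  have h4 : 4 * (t * (1 - t)) ≤ 1 := by nlinarith [sq_nonneg (2 * t - 1)]
  have h5 : ‖z - T z‖ ^ 2 ≤ δ ^ 2 + δ * d := by
    have : 4 * (t * (1 - t)) * δ * ‖x - y‖ ≤ 1 * δ * d := by gcongr
    linarith
  have h6 : δ * d = 1 / (16 * m ^ 2) := by rw [hδ]; field_simp
  have h7 : δ ≤ 1 := by
    rw [hδ, div_le_one (by positivity)]
    nlinarith [one_le_pow₀ hm' (n := 2)]
  have h8 : δ ^ 2 ≤ δ * d := by nlinarith
  have h9 : ((m : ℝ) * ‖z - T z‖) ^ 2 ≤ 1 := by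
    have : ‖z - T z‖ ^ 2 ≤ 2 * (1 / (16 * m ^ 2)) := by linarith
    calc ((m : ℝ) * ‖z - T z‖) ^ 2 = (m : ℝ) ^ 2 * ‖z - T z‖ ^ 2 := by ring
      _ ≤ (m : ℝ) ^ 2 * (2 * (1 / (16 * m ^ 2))) := by gcongr
      _ = (1 : ℝ) / 8 := by field_simp; norm_num
      _ ≤ 1 := by norm_num
  exact le_of_sq_le_sq (by simpa using h9) zero_le_one

lemma fM_le_of_mem (f : ℕ → ℕ) (n : ℕ) (hn : 1 ≤ n) : f n ≤ fM f n :=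
  Finset.le_sup (f := f) (Finset.mem_Icc.2 ⟨hn, le_rfl⟩)

lemma fM_monotone (f : ℕ → ℕ) : Monotone (fM f) := fun _ _ hab =>
  Finset.sup_mono (Finset.Icc_subset_Icc_right hab)

lemma sq_ge_self (d : ℕ) (hd : 1 ≤ d) (m : ℕ) : m ≤ 16 * d * m ^ 2 := by
  rcases Nat.eq_zero_or_pos m with rfl | h
  · simp
  · nlinarith [Nat.mul_le_mul hd h, Nat.mul_le_mul hd (Nat.mul_le_mul h h)]

lemma ftilde_ge (d : ℕ) (hd : 1 ≤ d) (f : ℕ → ℕ) (m : ℕ) : m ≤ ftilde d f m :=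
  (sq_ge_self d hd m).trans (le_max_right _ _)

lemma ftilde_mono (d : ℕ) (f : ℕ → ℕ) : Monotone (ftilde d f) := by
  intro a b hab
  unfold ftilde
  have : 16 * d * a ^ 2 ≤ 16 * d * b ^ 2 := by gcongr
  exact max_le_max (fM_monotone f this) this

lemma iter_ge {F : ℕ → ℕ} (hF : ∀ m, m ≤ F m) (n m : ℕ) : m ≤ F^[n] m :=
  Function.id_le_iterate_of_id_le (fun m => hF m) n m

lemma iter_le {F : ℕ → ℕ} (hF : ∀ m, m ≤ F m) {a b : ℕ} (hab : a ≤ b) (m : ℕ) :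
    F^[a] m ≤ F^[b] m := by
  obtain ⟨c, rfl⟩ := Nat.exists_eq_add_of_le hab
  rw [add_comm, Function.iterate_add_apply]
  exact iter_ge hF c _

/-- quantitative projection -/
lemma vi_aux {H : Type*} [NormedAddCommGroup H] [InnerProductSpace ℝ H]
    (d : ℕ) (hd : 1 ≤ d) (C : Set H) (hcv : Convex ℝ C)
    (hbd : ∀ x ∈ C, ∀ y ∈ C, ‖x - y‖ ≤ (d : ℝ))
    (T : H → H) (hT : ∀ x ∈ C, ∀ y ∈ C, ‖T x - T y‖ ≤ ‖x - y‖)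
    (e : ℝ) (he0 : 0 < e) (hed : e ≤ (d : ℝ) ^ 2) (φ : ℕ → ℕ) (k : ℕ) (hk : 1 ≤ k) (u : H)
    (N : ℕ) : ∀ x ∈ C, AFp T ((ftilde d φ)^[N] k) x → ‖u - x‖ ^ 2 < N * (e ^ 2 / (d : ℝ) ^ 2) →
    ∃ m, k ≤ m ∧ m ≤ (ftilde d φ)^[N] k ∧ φ m ≤ (ftilde d φ)^[N] k ∧
      ∃ x' ∈ C, AFp T (φ m) x' ∧ AFp T m x' ∧
        ∀ y ∈ C, AFp T m y → inner ℝ (u - x') (y - x') ≤ e := by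
  have hd' : (1 : ℝ) ≤ d := by exact_mod_cast hd
  induction N with
  | zero =>
    intro x _ _ hx
    exfalso
    have := sq_nonneg ‖u - x‖
    simp at hx
    linarith
  | succ N ih =>
    intro x hx hxa hxn
    rw [Function.iterate_succ_apply'] at hxa ⊢
    set m := (ftilde d φ)^[N] k with hm
    have hkm : k ≤ m := iter_ge (ftilde_ge d hd φ) N k
    have hm1 : 1 ≤ m := hk.trans hkm
    have b1 : 16 * d * m ^ 2 ≤ ftilde d φ m := le_max_right _ _
    have b2 : φ (16 * d * m ^ 2) ≤ ftilde d φ m :=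
      (fM_le_of_mem φ _ (hm1.trans (sq_ge_self d hd m))).trans (le_max_left _ _)
    by_cases hvi : ∀ y ∈ C, AFp T (16 * d * m ^ 2) y → inner ℝ (u - x) (y - x) ≤ e
    · exact ⟨16 * d * m ^ 2, hkm.trans (sq_ge_self d hd m), b1, b2, x, hx, AFp_mono b2 hxa,
        AFp_mono b1 hxa, hvi⟩
    · push Not at hvi
      obtain ⟨y, hy, hya, hye⟩ := hvi
      set t : ℝ := e / (d : ℝ) ^ 2 with ht
      have ht0 : 0 < t := by positivity
      have ht1 : t ≤ 1 := by rw [ht, div_le_one (by positivity)]; exact hed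
      have hz : x + t • (y - x) ∈ C := hcv.add_smul_sub_mem hx hy ⟨ht0.le, ht1⟩
      have hza := AFp_comb d hd C hcv hbd T hT m hm1 x y hx hy (AFp_mono b1 hxa) hya t ht0.le ht1 hz
      have hn : ‖u - (x + t • (y - x))‖ ^ 2 < N * (e ^ 2 / (d : ℝ) ^ 2) := by
        have e1 : u - (x + t • (y - x)) = (u - x) - t • (y - x) := by abel
        rw [e1, norm_sub_sq_real, inner_smul_right, norm_smul, Real.norm_of_nonneg ht0.le]
        have hR : ‖y - x‖ ^ 2 ≤ (d : ℝ) ^ 2 := by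
          have := hbd y hy x hx
          gcongr
        have h1 : t ^ 2 * ‖y - x‖ ^ 2 ≤ t ^ 2 * (d : ℝ) ^ 2 := by gcongr
        have h2 : t ^ 2 * (d : ℝ) ^ 2 = e ^ 2 / (d : ℝ) ^ 2 := by rw [ht]; field_simp
        have h3 : t * e = e ^ 2 / (d : ℝ) ^ 2 := by rw [ht]; field_simp
        have h4 : t * e < t * inner ℝ (u - x) (y - x) := by gcongr
        push_cast at hxn
        nlinarith
      obtain ⟨m', c1, c2, c3, c4⟩ := ih _ hz hza hn
      exact ⟨m', c1, c2.trans (ftilde_ge d hd φ m), c3.trans (ftilde_ge d hd φ m), c4⟩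

lemma vi_lemma {H : Type*} [NormedAddCommGroup H] [InnerProductSpace ℝ H]
    (d : ℕ) (hd : 1 ≤ d) (C : Set H) (hcv : Convex ℝ C)
    (hbd : ∀ x ∈ C, ∀ y ∈ C, ‖x - y‖ ≤ (d : ℝ))
    (T : H → H) (hT : ∀ x ∈ C, ∀ y ∈ C, ‖T x - T y‖ ≤ ‖x - y‖)
    (hfix : ∃ p ∈ C, T p = p)
    (e : ℝ) (he0 : 0 < e) (hed : e ≤ (d : ℝ) ^ 2)
    (N : ℕ) (hN : (d : ℝ) ^ 4 < N * e ^ 2) (φ : ℕ → ℕ) (k : ℕ) (hk : 1 ≤ k) (u : H)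
    (hu : u ∈ C) :
    ∃ m, k ≤ m ∧ m ≤ (ftilde d φ)^[N] k ∧ φ m ≤ (ftilde d φ)^[N] k ∧
      ∃ x' ∈ C, AFp T (φ m) x' ∧ AFp T m x' ∧
        ∀ y ∈ C, AFp T m y → inner ℝ (u - x') (y - x') ≤ e := by
  obtain ⟨p, hp, hTp⟩ := hfix
  have hd' : (1 : ℝ) ≤ d := by exact_mod_cast hd
  refine vi_aux d hd C hcv hbd T hT e he0 hed φ k hk u N p hp ?_ ?_
  · simp [AFp, hTp]
  · have hR : ‖u - p‖ ^ 2 ≤ (d : ℝ) ^ 2 := by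
      have := hbd u hu p hp
      gcongr
    refine hR.trans_lt ?_
    rw [← mul_div_assoc, lt_div_iff₀ (by positivity)]
    linarith [show (d : ℝ) ^ 4 = (d : ℝ) ^ 2 * (d : ℝ) ^ 2 by ring]

def PhiSeq (d N : ℕ) (f : ℕ → ℕ) : ℕ → ℕ → ℕ
  | 0 => f
  | (j + 1) => fun m => (ftilde d (PhiSeq d N f j))^[N] m

lemma iter_lemma {H : Type*} [NormedAddCommGroup H] [InnerProductSpace ℝ H]
    (d : ℕ) (hd : 1 ≤ d) (C : Set H) (hcv : Convex ℝ C)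
    (hbd : ∀ x ∈ C, ∀ y ∈ C, ‖x - y‖ ≤ (d : ℝ))
    (T : H → H) (hT : ∀ x ∈ C, ∀ y ∈ C, ‖T x - T y‖ ≤ ‖x - y‖)
    (hfix : ∃ p ∈ C, T p = p)
    (τ : ℝ) (hτ0 : 0 ≤ τ) (hτ1 : τ < 1)
    (G : H → H) (hGm : Set.MapsTo G C C)
    (hG : ∀ x ∈ C, ∀ y ∈ C, ‖G x - G y‖ ≤ τ * ‖x - y‖)
    (e : ℝ) (he0 : 0 < e) (hed : e ≤ (d : ℝ) ^ 2)
    (N : ℕ) (hN : (d : ℝ) ^ 4 < N * e ^ 2) (f : ℕ → ℕ)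
    (r : ℝ) (hr0 : 0 ≤ r) (hr : 2 * e ≤ ((1 - τ) * r) ^ 2) (j : ℕ) :
    ∀ (δ : ℝ) (m : ℕ) (x u : H), 0 ≤ δ → 1 ≤ m → x ∈ C → u ∈ C → ‖x - u‖ ≤ δ + r →
      AFp T (PhiSeq d N f j m) x → AFp T m x →
      (∀ y ∈ C, AFp T m y → inner ℝ (G u - x) (y - x) ≤ e) →
      ∃ m' x' u', 1 ≤ m' ∧ m' ≤ max m (PhiSeq d N f j m) ∧ x' ∈ C ∧ u' ∈ C ∧
        ‖x' - u'‖ ≤ τ ^ j * δ + r ∧ AFp T (f m') x' ∧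
        (∀ y ∈ C, AFp T m' y → inner ℝ (G u' - x') (y - x') ≤ e) := by
  induction j with
  | zero =>
    intro δ m x u hδ hm hx hu hxu hxa hxm hvi
    exact ⟨m, x, u, hm, le_max_left _ _, hx, hu, by simpa using hxu, hxa, hvi⟩
  | succ j ih =>
    intro δ m x u hδ hm hx hu hxu hxa hxm hvi
    obtain ⟨m1, c1, c2, c3, x1, hx1, c4, c5, c6⟩ := vi_lemma d hd C hcv hbd T hT hfix e he0 hed N hN
      (PhiSeq d N f j) m hm (G x) (hGm hx)
    have hP : (ftilde d (PhiSeq d N f j))^[N] m = PhiSeq d N f (j + 1) m := rfl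
    rw [hP] at c2 c3
    have i1 := hvi x1 hx1 (AFp_mono c1 c5)
    have i2 := c6 x hx (AFp_mono c2 hxa)
    have hD : ‖x1 - x‖ ^ 2 ≤ 2 * e + τ * ‖x - u‖ * ‖x1 - x‖ := by
      have q : ‖x1 - x‖ ^ 2 = inner ℝ (G u - x) (x1 - x) + inner ℝ (G x - x1) (x - x1)
          + inner ℝ (G x - G u) (x1 - x) := by
        have e1 : x - x1 = - (x1 - x) := by abel
        rw [e1, inner_neg_right, ← sub_eq_add_neg, ← inner_sub_left, ← inner_add_left,
          ← real_inner_self_eq_norm_sq]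
        congr 1
        abel
      have q2 : inner ℝ (G x - G u) (x1 - x) ≤ τ * ‖x - u‖ * ‖x1 - x‖ :=
        (real_inner_le_norm _ _).trans
          (mul_le_mul_of_nonneg_right (hG x hx u hu) (norm_nonneg _))
      linarith
    have hD1 : ‖x1 - x‖ ≤ τ * δ + r := by
      by_contra hcon
      push Not at hcon
      set D := ‖x1 - x‖
      have g1 : τ * ‖x - u‖ ≤ τ * (δ + r) := by gcongr
      have hs0 : 0 ≤ (1 - τ) * r := mul_nonneg (by linarith) hr0
      have hτδ : 0 ≤ τ * δ := by positivity
      have hτr : 0 ≤ τ * r := by positivity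
      have hD0 : 0 ≤ D := norm_nonneg _
      have g2 : τ * ‖x - u‖ * D ≤ τ * (δ + r) * D := by gcongr
      have g3 : (1 - τ) * r < D - τ * (δ + r) := by nlinarith
      have g4 : (1 - τ) * r < D := by nlinarith
      have g5 : ((1 - τ) * r) * ((1 - τ) * r) < D * (D - τ * (δ + r)) :=
        mul_lt_mul'' g4 g3 hs0 hs0
      nlinarith
    obtain ⟨m', x', u', d1, d2, d3, d4, d5, d6, d7⟩ := ih (τ * δ) m1 x1 x (by positivity)
      (hm.trans c1) hx1 hx hD1 c4 c5 c6
    exact ⟨m', x', u', d1, d2.trans ((max_le c2 c3).trans (le_max_right _ _)), d3, d4,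
      by rw [pow_succ]; linarith [mul_assoc (τ ^ j) τ δ], d6, d7⟩

lemma Phi_bound (d : ℕ) (hd : 1 ≤ d) (N N' : ℕ) (hNN : N' * N' + N' ≤ N) (f : ℕ → ℕ) (j : ℕ) :
    ∀ m, PhiSeq d N' f (j + 2) m ≤ (ftilde d f)^[N ^ (j + 1)] m := by
  have hF := ftilde_ge d hd f
  have key : ∀ (φ : ℕ → ℕ) (t : ℕ), (∀ m, φ m ≤ (ftilde d f)^[t] m) →
      ∀ m, (ftilde d φ)^[N'] m ≤ (ftilde d f)^[(t + 1) * N'] m := by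
    intro φ t hφ m
    rw [Function.iterate_mul]
    refine Monotone.iterate_le_of_le (ftilde_mono d φ) ?_ N' m
    intro a
    have hmono := (ftilde_mono d f).iterate t
    have h1 : (ftilde d f)^[t] (16 * d * a ^ 2) ≤ (ftilde d f)^[t + 1] a := by
      rw [Function.iterate_succ_apply]
      exact hmono (le_max_right _ _)
    refine le_trans (max_le ?_ (iter_ge hF t _)) h1
    refine Finset.sup_le fun i hi => (hφ i).trans (hmono (Finset.mem_Icc.1 hi).2)
  induction j with
  | zero =>
    intro m
    refine (key (PhiSeq d N' f 1) N' (fun m => le_rfl) m).trans (iter_le hF ?_ m)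
    rw [zero_add, pow_one]
    nlinarith
  | succ j ih =>
    intro m
    refine (key _ _ ih m).trans (iter_le hF ?_ m)
    rcases Nat.eq_zero_or_pos N' with h0 | h0
    · simp [h0]
    · have hN1 : 1 ≤ N := by nlinarith
      have h1 : 1 ≤ N ^ (j + 1) := Nat.one_le_pow _ _ hN1
      have h2 : 2 * N' ≤ N := by nlinarith
      calc (N ^ (j + 1) + 1) * N' ≤ (N ^ (j + 1) + N ^ (j + 1)) * N' := by gcongr
        _ = N ^ (j + 1) * (2 * N') := by ring
        _ ≤ N ^ (j + 1) * N := by gcongr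
        _ = N ^ (j + 1 + 1) := (pow_succ _ _).symm

lemma ftildeI_eq (d N : ℕ) (f : ℕ → ℕ) (i : ℕ) : ftildeI d N f i = ftilde d (fIt d N f i) := rfl

lemma le_ftildeI (d : ℕ) (hd : 1 ≤ d) (N : ℕ) (f : ℕ → ℕ) (i m : ℕ) :
    (ftilde d f)^[N ^ i] m ≤ ftildeI d N f i m := by
  rcases Nat.eq_zero_or_pos m with h0 | h0
  · subst h0
    have : ftilde d f 0 = 0 := by simp [ftilde, fM]
    rw [Function.iterate_fixed this]
    exact Nat.zero_le _
  · have h1 := sq_ge_self d hd m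
    refine le_trans ?_ (le_max_left _ _)
    refine le_trans ?_ (fM_le_of_mem _ _ (h0.trans_le h1))
    exact (ftilde_mono d f).iterate _ h1

lemma Phi_le_kSeq (d : ℕ) (hd : 1 ≤ d) (N N' : ℕ) (hNN : N' * N' + N' ≤ N) (f : ℕ → ℕ) (j : ℕ) :
    PhiSeq d N' f (j + 1) 1 ≤ kSeq d N f j := by
  have hF := ftilde_ge d hd f
  have key : ∀ i m, (ftilde d f)^[N ^ i * N] m ≤ (ftildeI d N f i)^[N] m := by
    intro i m
    rw [Function.iterate_mul]
    exact Monotone.iterate_le_of_le ((ftilde_mono d f).iterate _)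
      (fun a => le_ftildeI d hd N f i a) N m
  have hk : ∀ j, 1 ≤ kSeq d N f j := by
    intro j
    induction j with
    | zero => exact iter_ge (ftilde_ge d hd (fIt d N f 0)) N 1
    | succ j ih => exact ih.trans (iter_ge (ftilde_ge d hd (fIt d N f j)) N _)
  cases j with
  | zero =>
    refine le_trans (iter_le hF ?_ 1) (key 0 1)
    simp; nlinarith
  | succ j =>
    refine (Phi_bound d hd N N' hNN f j 1).trans ?_
    rw [pow_succ]
    refine le_trans ?_ (key j _)
    exact (ftilde_mono d f).iterate _ (hk j)

lemma le_fM0 (F : ℕ → ℕ) {i n : ℕ} (hi : i ≤ n) : F i ≤ fM0 F n :=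
  Finset.le_sup (f := F) (Finset.mem_range.2 (by omega))

/-- final step -/
lemma close_lemma {H : Type*} [NormedAddCommGroup H] [InnerProductSpace ℝ H]
    (d : ℕ) (hd : 1 ≤ d)
    (C : Set H) 
    (hbd : ∀ x ∈ C, ∀ y ∈ C, ‖x - y‖ ≤ (d : ℝ))
    (T : H → H) (hTm : Set.MapsTo T C C)
    (hT : ∀ x ∈ C, ∀ y ∈ C, ‖T x - T y‖ ≤ ‖x - y‖)
    (τ : ℝ) (hτ0 : 0 ≤ τ) (hτ1 : τ < 1)
    (G : H → H) (hGm : Set.MapsTo G C C)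
    (hG : ∀ x ∈ C, ∀ y ∈ C, ‖G x - G y‖ ≤ τ * ‖x - y‖)
    (l : ℝ) (hl0 : 0 < l) (hl1 : l ≤ 1) (k : ℕ) (hlk : l ≤ 1 / ((d * k : ℕ) + 1 : ℝ))
    (w : H) (hw : w ∈ C) (hv : w = (1 - l) • T w + l • G (T w))
    (ε : ℝ) (hε : 0 < ε) (e1 : ℝ) (he1 : e1 = (1 - τ) * (ε / 2) ^ 2 / 2)
    (x : H) (hx : x ∈ C) (a : ℝ) (ha : ‖x - T x‖ ≤ a) (hal : 3 * d * a ≤ e1 * l)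
    (hvi : ∀ y ∈ C, AFp T k y → inner ℝ (G x - x) (y - x) ≤ e1) : ‖w - x‖ ≤ ε / 2 := by
  have hd' : (1 : ℝ) ≤ d := by exact_mod_cast hd
  have ha0 : 0 ≤ a := (norm_nonneg _).trans ha
  have hAw : w - T w = l • (G (T w) - T w) := by
    nth_rewrite 1 [hv]
    rw [sub_smul, one_smul, smul_sub]; abel
  have hwa : AFp T k w := by
    unfold AFp
    rw [hAw, norm_smul, Real.norm_of_nonneg hl0.le]
    have h1 := hbd _ (hGm (hTm hw)) _ (hTm hw)
    rw [le_div_iff₀ (by positivity)] at hlk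
    push_cast at hlk
    have : (k : ℝ) * (l * ‖G (T w) - T w‖) ≤ k * (l * d) := by gcongr
    nlinarith
  have hv1 := hvi w hw hwa
  have hDd := hbd w hw x hx
  set D := ‖w - x‖ with hD
  have hD0 : 0 ≤ D := norm_nonneg _
  -- monotonicity of I - T
  have m1 : - (a * d) ≤ inner ℝ (w - T w) (w - x) := by
    have q : inner ℝ (w - T w) (w - x) = D ^ 2 - inner ℝ (T w - T x) (w - x)
        + inner ℝ (x - T x) (w - x) := by
      rw [hD, ← real_inner_self_eq_norm_sq, ← inner_sub_left, ← inner_add_left]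
      congr 1; abel
    have q1 : inner ℝ (T w - T x) (w - x) ≤ D * D :=
      (real_inner_le_norm _ _).trans (mul_le_mul_of_nonneg_right (hT w hw x hx) hD0)
    have q2 : -(a * d) ≤ inner ℝ (x - T x) (w - x) := by
      have := neg_le_of_abs_le (abs_real_inner_le_norm (x - T x) (w - x))
      have : ‖x - T x‖ * ‖w - x‖ ≤ a * d := by gcongr
      linarith
    nlinarith
  -- F w
  have m2 : l * inner ℝ (w - G (T w)) (w - x) ≤ a * d := by
    have q : l • (w - G (T w)) = -((1 - l) • (w - T w)) := by
      have h1 : l • (w - G (T w)) + (1 - l) • (w - T w)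
          = (w - T w) - l • (G (T w) - T w) := by module
      rw [← hAw, sub_self] at h1
      exact eq_neg_of_add_eq_zero_left h1
    rw [← real_inner_smul_left, q, inner_neg_left, real_inner_smul_left]
    nlinarith [mul_nonneg ha0 (by linarith : (0 : ℝ) ≤ d), m1]
  have m3 : inner ℝ (w - G (T w)) (w - x) ≤ e1 / 3 := by
    have : l * inner ℝ (w - G (T w)) (w - x) ≤ l * (e1 / 3) := by nlinarith
    exact le_of_mul_le_mul_left this hl0
  have m4 : inner ℝ (G (T w) - G x) (w - x) ≤ τ * D * D + e1 / 3 := by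
    have q1 : inner ℝ (G (T w) - G x) (w - x) ≤ (τ * ‖T w - x‖) * D :=
      (real_inner_le_norm _ _).trans (mul_le_mul_of_nonneg_right (hG _ (hTm hw) x hx) hD0)
    have q2 : ‖T w - x‖ ≤ D + a := by
      have : T w - x = (T w - T x) - (x - T x) := by abel
      rw [this]
      linarith [norm_sub_le (T w - T x) (x - T x), hT w hw x hx]
    have q3 : (τ * ‖T w - x‖) * D ≤ (τ * (D + a)) * D := by gcongr
    have q4 : τ * a * D ≤ 1 * a * d := by gcongr
    have he1' : 0 ≤ e1 := by
      rw [he1]; have : 0 ≤ 1 - τ := by linarith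
      positivity
    have q5 : e1 * l ≤ e1 := by nlinarith
    nlinarith
  have m5 : D ^ 2 = inner ℝ (w - G (T w)) (w - x) + inner ℝ (G (T w) - G x) (w - x)
      + inner ℝ (G x - x) (w - x) := by
    rw [hD, ← real_inner_self_eq_norm_sq, ← inner_add_left, ← inner_add_left]
    congr 1; abel
  have he1' : 0 ≤ e1 := by
    rw [he1]; have : 0 ≤ 1 - τ := by linarith
    positivity
  have m6 : (1 - τ) * D ^ 2 ≤ (1 - τ) * (ε / 2) ^ 2 := by nlinarith
  have m7 : D ^ 2 ≤ (ε / 2) ^ 2 := le_of_mul_le_mul_left m6 (by linarith)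
  exact le_of_sq_le_sq m7 (by positivity)

/-- Rate of metastability (against `g̃`) for the resolvent sequence
`v_n = (1−λ_n)·T(v_n) + λ_n·G(T(v_n))` of the hybrid steepest descent method. -/
theorem resolvent_metastable_single
    {H : Type*} [NormedAddCommGroup H] [InnerProductSpace ℝ H] [CompleteSpace H]
    (d : ℕ) (hd : 1 ≤ d)
    (C : Set H) (hne : C.Nonempty) (hcl : IsClosed C) (hcv : Convex ℝ C)
    (hbd : ∀ x ∈ C, ∀ y ∈ C, ‖x - y‖ ≤ (d : ℝ))
    (T : H → H) (hTm : Set.MapsTo T C C)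
    (hT : ∀ x ∈ C, ∀ y ∈ C, ‖T x - T y‖ ≤ ‖x - y‖)
    (hfix : ∃ p ∈ C, T p = p)
    (τ : ℝ) (hτ0 : 0 ≤ τ) (hτ1 : τ < 1)
    (G : H → H) (hGm : Set.MapsTo G C C)
    (hG : ∀ x ∈ C, ∀ y ∈ C, ‖G x - G y‖ ≤ τ * ‖x - y‖)
    (lam : ℕ → ℝ) (hlam : ∀ n, lam n ∈ Set.Ioc (0 : ℝ) 1)
    (h : ℕ → ℕ) (hh : ∀ n, 1 ≤ h n) (hlamh : ∀ n, 1 / (h n : ℝ) ≤ lam n)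
    (χ : ℕ → ℕ) (hχ : ∀ n : ℕ, ∀ i ≥ χ n, lam i ≤ 1 / ((n : ℝ) + 1))
    (v : ℕ → H) (hvC : ∀ n, v n ∈ C)
    (hv : ∀ n, v n = (1 - lam n) • T (v n) + lam n • G (T (v n)))
    (ε : ℝ) (hε : ε ∈ Set.Ioc (0 : ℝ) 1) (g : ℕ → ℕ) :
    ∃ j ≤ XiDef ε g χ h d τ, ‖v j - v (gTil g j)‖ ≤ ε := by
  obtain ⟨hε0, hε1⟩ := hε
  have hd' : (1 : ℝ) ≤ d := by exact_mod_cast hd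
  have hτ' : 0 < 1 - τ := by linarith
  obtain ⟨e1, he1⟩ : ∃ e1, e1 = (1 - τ) * (ε / 2) ^ 2 / 2 := ⟨_, rfl⟩
  have he10 : 0 < e1 := by rw [he1]; positivity
  have he18 : e1 ≤ 1 / 8 := by rw [he1]; nlinarith [sq_nonneg ε]
  obtain ⟨et, het⟩ : ∃ et, et = (1 - τ) ^ 2 / (6 + 8 * (d : ℝ)) * (e1 ^ 2 / (2 * (d : ℝ) ^ 2)) :=
    ⟨_, rfl⟩
  have het0 : 0 < et := by rw [het]; positivity
  -- basic estimate
  have hr : 2 * (d * et) ≤ ((1 - τ) * (e1 / (2 * d))) ^ 2 := by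
    have : 2 * (d * et) = ((1 - τ) * e1) ^ 2 * (1 / (d * (6 + 8 * d))) := by
      rw [het]; field_simp
    rw [this]
    have h2 : ((1 - τ) * (e1 / (2 * d))) ^ 2 = ((1 - τ) * e1) ^ 2 * (1 / (4 * d ^ 2)) := by
      field_simp; norm_num
    rw [h2]
    exact mul_le_mul_of_nonneg_left
      (one_div_le_one_div_of_le (by positivity) (by nlinarith)) (by positivity)
  have hes : d * et ≤ e1 / 8 := by
    have h1 : (1 - τ) * (e1 / (2 * d)) ≤ 1 * (e1 / 2) := by
      gcongr
      · linarith
      · linarith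
    have h2 : ((1 - τ) * (e1 / (2 * d))) ^ 2 ≤ (1 * (e1 / 2)) ^ 2 := by gcongr
    nlinarith
  have het1 : et ≤ 1 := by nlinarith
  have hx1 : (1 : ℝ) ≤ d ^ 2 / et ^ 2 := by
    rw [one_le_div (by positivity)]; gcongr; linarith
  obtain ⟨N', hN'⟩ : ∃ N', N' = ⌊(d : ℝ) ^ 2 / et ^ 2⌋₊ + 1 := ⟨_, rfl⟩
  have hN1 : (d : ℝ) ^ 2 / et ^ 2 < N' := by
    rw [hN']; push_cast; exact Nat.lt_floor_add_one _
  have hN2 : (N' : ℝ) ≤ d ^ 2 / et ^ 2 + 1 := by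
    rw [hN']; push_cast; gcongr; exact Nat.floor_le (by positivity)
  obtain ⟨N, hNd⟩ : ∃ N, N = ⌈8 * (d : ℝ) ^ 4 / et ^ 4⌉₊ := ⟨_, rfl⟩
  have hNN : N' * N' + N' ≤ N := by
    have h1 : 8 * (d : ℝ) ^ 4 / et ^ 4 ≤ N := by rw [hNd]; exact Nat.le_ceil _
    have h2 : 8 * (d : ℝ) ^ 4 / et ^ 4 = 8 * (d ^ 2 / et ^ 2) ^ 2 := by ring
    rw [h2] at h1
    have : (N' : ℝ) * N' + N' ≤ N := by
      have h0 : (0 : ℝ) ≤ N' := by positivity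
      nlinarith
    exact_mod_cast this
  have hNe : (d : ℝ) ^ 4 < N' * (d * et) ^ 2 := by
    rw [div_lt_iff₀ (by positivity)] at hN1
    nlinarith [show 0 < (d : ℝ) ^ 2 by positivity]
  have hed : d * et ≤ (d : ℝ) ^ 2 := by nlinarith
  obtain ⟨f, hf⟩ : ∃ f, f = fXi ε τ g χ h d := ⟨_, rfl⟩
  obtain ⟨i0, hi0⟩ : ∃ i0, i0 = sInf {i : ℕ | τ ^ (i + 1) ≤ et / (6 * (d : ℝ) ^ 2)} := ⟨_, rfl⟩
  have hi0τ : τ ^ (i0 + 1) ≤ et / (6 * (d : ℝ) ^ 2) := by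
    have hne : {i : ℕ | τ ^ (i + 1) ≤ et / (6 * (d : ℝ) ^ 2)}.Nonempty := by
      obtain ⟨n, hn⟩ := exists_pow_lt_of_lt_one (show 0 < et / (6 * (d : ℝ) ^ 2) by positivity) hτ1
      exact ⟨n, (pow_le_pow_of_le_one hτ0 hτ1.le (Nat.le_succ n)).trans hn.le⟩
    rw [hi0]; exact Nat.sInf_mem hne
  have hK : KXi ε g χ h d τ = kSeq d N f i0 := by
    rw [hNd, hf, hi0, het, he1]; rfl
  -- stages
  obtain ⟨p, hp⟩ := hne
  obtain ⟨m1, c1, c2, c3, x1, hx1C, c4, c5, c6⟩ := vi_lemma d hd C hcv hbd T hT hfix (d * et)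
    (by positivity) hed N' hNe (PhiSeq d N' f i0) 1 le_rfl (G p) (hGm hp)
  obtain ⟨k, x, u, hk1, hkm, hx, hu, hxu, hxa, hvi⟩ := iter_lemma d hd C hcv hbd T hT hfix τ hτ0 hτ1
    G hGm hG (d * et) (by positivity) hed N' hNe f (e1 / (2 * d)) (by positivity) hr i0 d m1 x1 p
    (by positivity) c1 hx1C hp
    ((hbd x1 hx1C p hp).trans (le_add_of_nonneg_right (by positivity))) c4 c5 c6
  have hkK : k ≤ KXi ε g χ h d τ := by
    rw [hK]
    exact (hkm.trans (max_le c2 c3)).trans (Phi_le_kSeq d hd N N' hNN f i0)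
  have hvi' : ∀ y ∈ C, AFp T k y → inner ℝ (G x - x) (y - x) ≤ e1 := by
    intro y hy hya
    have h1 := hvi y hy hya
    have h2 : inner ℝ (G x - x) (y - x) = inner ℝ (G u - x) (y - x) + inner ℝ (G x - G u) (y - x) := by
      rw [← inner_add_left]; congr 1; abel
    have h3 : inner ℝ (G x - G u) (y - x) ≤ (τ * (τ ^ i0 * d + e1 / (2 * d))) * d := by
      refine (real_inner_le_norm _ _).trans ?_
      have a1 := hG x hx u hu
      have a2 := hbd y hy x hx
      have a3 : τ * ‖x - u‖ ≤ τ * (τ ^ i0 * d + e1 / (2 * d)) := by gcongr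
      have a4 := a1.trans a3
      have a5 : 0 ≤ τ * (τ ^ i0 * d + e1 / (2 * d)) := by positivity
      gcongr
    have h4 : (τ * (τ ^ i0 * d + e1 / (2 * d))) * d = τ ^ (i0 + 1) * d ^ 2 + τ * (e1 / 2) := by
      field_simp; ring
    have h5 : τ ^ (i0 + 1) * (d : ℝ) ^ 2 ≤ et / 6 := by
      have : et / 6 = et / (6 * (d : ℝ) ^ 2) * d ^ 2 := by field_simp
      rw [this]; gcongr
    nlinarith
  -- choice of j
  obtain ⟨j, hj⟩ : ∃ j, j = min (χ (d * k)) (χ (d * KXi ε g χ h d τ)) := ⟨_, rfl⟩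
  have hlamj : ∀ i ≥ j, lam i ≤ 1 / ((d * k : ℕ) + 1 : ℝ) := by
    intro i hi
    rcases le_total (χ (d * k)) (χ (d * KXi ε g χ h d τ)) with hle | hle
    · rw [min_eq_left hle] at hj
      exact hχ _ i (hj ▸ hi)
    · rw [min_eq_right hle] at hj
      refine (hχ _ i (hj ▸ hi)).trans ?_
      gcongr
  have hclose : ∀ i, j ≤ i → i ≤ fM0 (gTil g) (χ (d * k)) → ‖v i - x‖ ≤ ε / 2 := by
    intro i hij hiM
    set M := fM0 h (fM0 (gTil g) (χ (d * k))) with hM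
    have hhM : h i ≤ M := le_fM0 h hiM
    have hhi : (1 : ℝ) ≤ h i := by exact_mod_cast hh i
    have hM1 : (1 : ℝ) ≤ M := hhi.trans (by exact_mod_cast hhM)
    have hfk : 3 * d * M / e1 ≤ (f k : ℝ) := by
      rw [hf]
      refine le_trans (le_of_eq ?_) (Nat.le_ceil _)
      rw [he1, ← hM]; field_simp; norm_num
    have hfpos : 0 < (f k : ℝ) := lt_of_lt_of_le (by positivity) hfk
    refine close_lemma d hd C hbd T hTm hT τ hτ0 hτ1 G hGm hG (lam i) (hlam i).1 (hlam i).2 k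
      (hlamj i hij) (v i) (hvC i) (hv i) ε hε0 e1 he1 x hx (1 / f k) ?_ ?_ hvi'
    · rw [le_div_iff₀ hfpos]; unfold AFp at hxa; linarith
    · have h1 : 1 / (M : ℝ) ≤ lam i := by
        refine le_trans ?_ (hlamh i)
        gcongr
      calc 3 * d * (1 / (f k : ℝ)) ≤ 3 * d * (1 / (3 * d * M / e1)) := by gcongr
        _ = e1 * (1 / M) := by field_simp
        _ ≤ e1 * lam i := by gcongr
  have hjχ : j ≤ χ (d * k) := hj ▸ min_le_left _ _
  have hjg : j ≤ gTil g j := le_max_left _ _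
  have hgM : gTil g j ≤ fM0 (gTil g) (χ (d * k)) := le_fM0 _ hjχ
  refine ⟨j, hj ▸ min_le_right _ _, ?_⟩
  have a1 := hclose j le_rfl (hjg.trans hgM)
  have a2 := hclose (gTil g j) hjg hgM
  have : v j - v (gTil g j) = (v j - x) - (v (gTil g j) - x) := by abel
  rw [this]
  linarith [norm_sub_le (v j - x) (v (gTil g j) - x)]
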